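/- arXiv:2204.06686 — 2 statements merged into one kernel-verified Lean document; each statement's English description precedes it below -/
import Mathlib

section
/- There exists an absolute constant c > 0 such that for every n ∈ ℕ, every d ≥ 1, every f : {0,1}^n → {0,1}, and every 2-coloring col of the edges of the hypercube into red and blue, Talagrand_col(f) ≥ c·√d·W_{≥d}[f]. -/
open Finset

noncomputable section

/-- Expectation over the uniform distribution on `{0,1}^n`. -/
def hcExp (n : ℕ) (g : (Fin n → Bool) → ℝ) : ℝ :=
  (∑ x : Fin n → Bool, g x) / 2 ^ n

/-- Flip the `i`-th coordinate of `x`. -/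
def hcFlip {n : ℕ} (x : Fin n → Bool) (i : Fin n) : Fin n → Bool :=
  Function.update x i (!(x i))

/-- Sensitivity of `f` at `x`. -/
def sens {n : ℕ} (f : (Fin n → Bool) → Bool) (x : Fin n → Bool) : ℕ :=
  (Finset.univ.filter fun i => f (hcFlip x i) ≠ f x).card

/-- `f` with values in `{0,1} ⊆ ℝ`. -/
def toReal {n : ℕ} (f : (Fin n → Bool) → Bool) : (Fin n → Bool) → ℝ :=
  fun x => if f x then 1 else 0

/-- Variance of a Boolean function. -/
def hcVar (n : ℕ) (f : (Fin n → Bool) → Bool) : ℝ :=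
  hcExp n (toReal f) - (hcExp n (toReal f)) ^ 2

/-- Influence of coordinate `i`. -/
def influence (n : ℕ) (f : (Fin n → Bool) → Bool) (i : Fin n) : ℝ :=
  hcExp n (fun x => if f (hcFlip x i) = f x then 0 else 1)

/-- Fourier character. -/
def chi {n : ℕ} (S : Finset (Fin n)) (x : Fin n → Bool) : ℝ :=
  ∏ i ∈ S, (if x i then (-1 : ℝ) else 1)

/-- Fourier coefficient of `g` at `S`. -/
def fcoef (n : ℕ) (g : (Fin n → Bool) → ℝ) (S : Finset (Fin n)) : ℝ :=
  hcExp n (fun x => g x * chi S x)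

/-- Derivative of `g` along coordinate `i`. -/
def derivOn {n : ℕ} (g : (Fin n → Bool) → ℝ) (i : Fin n) (x : Fin n → Bool) : ℝ :=
  g (Function.update x i false) - g (Function.update x i true)

/-- Euclidean norm of the gradient of `g` at `x`. -/
def gradNorm2 {n : ℕ} (g : (Fin n → Bool) → ℝ) (x : Fin n → Bool) : ℝ :=
  Real.sqrt (∑ i, (derivOn g i x) ^ 2)

/-- `ℓ_p` norm of the gradient of `g` at `x`. -/
def gradNormP {n : ℕ} (p : ℝ) (g : (Fin n → Bool) → ℝ) (x : Fin n → Bool) : ℝ :=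
  (∑ i, |derivOn g i x| ^ p) ^ (1 / p)

/-- Fourier weight at exactly level `d`. -/
def wEq (n : ℕ) (g : (Fin n → Bool) → ℝ) (d : ℕ) : ℝ :=
  ∑ S ∈ Finset.univ.filter (fun S : Finset (Fin n) => S.card = d), (fcoef n g S) ^ 2

/-- Approximate level-`d` Fourier weight: levels in `[d, 2d)`. -/
def wApprox (n : ℕ) (g : (Fin n → Bool) → ℝ) (d : ℕ) : ℝ :=
  ∑ S ∈ Finset.univ.filter (fun S : Finset (Fin n) => d ≤ S.card ∧ S.card < 2 * d),
    (fcoef n g S) ^ 2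

/-- Fourier weight at levels `≥ d`. -/
def wGe (n : ℕ) (g : (Fin n → Bool) → ℝ) (d : ℕ) : ℝ :=
  ∑ S ∈ Finset.univ.filter (fun S : Finset (Fin n) => d ≤ S.card), (fcoef n g S) ^ 2


/-- Number of red sensitive edges at `x` counted when `f x = 1` (red sensitivity).
Here a coloring `col : (Fin n → Bool) → Fin n → Bool` gives the color (`true` = red,
`false` = blue) of the edge `(x, x ⊕ eᵢ)`. -/
def sRed {n : ℕ} (f : (Fin n → Bool) → Bool) (col : (Fin n → Bool) → Fin n → Bool)
    (x : Fin n → Bool) : ℕ :=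
  if f x then
    (Finset.univ.filter fun i => f (hcFlip x i) ≠ f x ∧ col x i = true).card
  else 0

/-- Blue sensitivity: counted when `f x = 0`. -/
def sBlue {n : ℕ} (f : (Fin n → Bool) → Bool) (col : (Fin n → Bool) → Fin n → Bool)
    (x : Fin n → Bool) : ℕ :=
  if f x then 0
  else (Finset.univ.filter fun i => f (hcFlip x i) ≠ f x ∧ col x i = false).card

/-- The Talagrand boundary with respect to the coloring `col`. -/
def talagrandCol {n : ℕ} (f : (Fin n → Bool) → Bool)
    (col : (Fin n → Bool) → Fin n → Bool) : ℝ :=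
  hcExp n (fun x => Real.sqrt (sRed f col x)) + hcExp n (fun x => Real.sqrt (sBlue f col x))

/-- The coloring is symmetric: the two endpoints of an edge see the same color. -/
def colSymm {n : ℕ} (col : (Fin n → Bool) → Fin n → Bool) : Prop :=
  ∀ (x : Fin n → Bool) (i : Fin n), col (hcFlip x i) i = col x i

lemma hcExp_add' {n : ℕ} (g h : (Fin n → Bool) → ℝ) :
    hcExp n (fun x => g x + h x) = hcExp n g + hcExp n h := by
  simp only [hcExp, Finset.sum_add_distrib, add_div]

lemma hcExp_mono' {n : ℕ} {g h : (Fin n → Bool) → ℝ} (H : ∀ x, g x ≤ h x) :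
    hcExp n g ≤ hcExp n h := by
  unfold hcExp
  gcongr with x
  exact H x

lemma hcExp_nonneg' {n : ℕ} {g : (Fin n → Bool) → ℝ} (H : ∀ x, 0 ≤ g x) :
    0 ≤ hcExp n g := by
  unfold hcExp
  have : 0 ≤ ∑ x, g x := Finset.sum_nonneg fun x _ => H x
  positivity

lemma hcExp_sum' {n : ℕ} {ι : Type*} (s : Finset ι) (g : ι → (Fin n → Bool) → ℝ) :
    hcExp n (fun x => ∑ i ∈ s, g i x) = ∑ i ∈ s, hcExp n (g i) := by
  simp only [hcExp]
  rw [Finset.sum_comm, Finset.sum_div]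

lemma hcExp_mul' {n : ℕ} (c : ℝ) (g : (Fin n → Bool) → ℝ) :
    hcExp n (fun x => c * g x) = c * hcExp n g := by
  simp only [hcExp, ← Finset.mul_sum, mul_div_assoc]

lemma hcExp_one' {n : ℕ} : hcExp n (fun _ => 1) = 1 := by
  simp [hcExp]

lemma chi_orth {n : ℕ} (x y : Fin n → Bool) :
    ∑ S : Finset (Fin n), chi S x * chi S y = if x = y then 2 ^ n else 0 := by
  simp only [chi, ← Finset.prod_mul_distrib]
  have h := Finset.prod_one_add (s := (Finset.univ : Finset (Fin n)))
    (f := fun i => (if x i then (-1 : ℝ) else 1) * (if y i then (-1 : ℝ) else 1))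
  rw [Finset.powerset_univ] at h
  rw [← h]
  split_ifs with hxy
  · subst hxy
    have : ∀ i, (1 + (if x i then (-1 : ℝ) else 1) * (if x i then (-1 : ℝ) else 1)) = 2 := by
      intro i; split_ifs <;> norm_num
    simp only [this, Finset.prod_const, Finset.card_univ, Fintype.card_fin]
  · obtain ⟨i, hi⟩ := Function.ne_iff.mp hxy
    apply Finset.prod_eq_zero (Finset.mem_univ i)
    cases hx : x i <;> cases hy : y i <;> simp_all

lemma parseval' {n : ℕ} (g : (Fin n → Bool) → ℝ) :
    ∑ S, (fcoef n g S) ^ 2 = hcExp n (fun x => g x ^ 2) := by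
  have h : ∀ S, (fcoef n g S) ^ 2 =
      (∑ x, ∑ y, g x * g y * (chi S x * chi S y)) / (2 ^ n * 2 ^ n) := by
    intro S
    rw [fcoef, hcExp, sq, div_mul_div_comm, Finset.sum_mul_sum]
    congr 1
    refine Finset.sum_congr rfl fun x _ => Finset.sum_congr rfl fun y _ => ?_
    ring
  simp only [h]
  rw [← Finset.sum_div, Finset.sum_comm]
  have h2 : ∀ x, ∑ S, ∑ y, g x * g y * (chi S x * chi S y) = g x ^ 2 * 2 ^ n := by
    intro x
    rw [Finset.sum_comm]
    simp only [← Finset.mul_sum, chi_orth]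
    simp [sq]
  simp only [h2, hcExp]
  rw [← Finset.sum_mul]
  field_simp

def comb {n : ℕ} (J : Finset (Fin n)) (x y : Fin n → Bool) : Fin n → Bool :=
  fun i => if i ∈ J then y i else x i

lemma hcExp_comb {n : ℕ} (J : Finset (Fin n)) (G : (Fin n → Bool) → ℝ) :
    hcExp n (fun x => hcExp n (fun y => G (comb J x y))) = hcExp n G := by
  have hinv : Function.Involutive
      (fun p : (Fin n → Bool) × (Fin n → Bool) => (comb J p.1 p.2, comb J p.2 p.1)) := by
    rintro ⟨x, y⟩
    ext i <;> simp only [comb] <;> split_ifs <;> rfl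
  have h := Equiv.sum_comp hinv.toPerm (fun p => G p.1)
  simp only [Function.Involutive.coe_toPerm] at h
  rw [Fintype.sum_prod_type, Fintype.sum_prod_type] at h
  simp only [Finset.sum_const, Finset.card_univ] at h
  simp only [hcExp]
  rw [← Finset.sum_div, h]
  simp [← Finset.mul_sum]

lemma hcFlip_invol {n : ℕ} (i : Fin n) :
    Function.Involutive (fun x : Fin n → Bool => hcFlip x i) := by
  intro x
  simp [hcFlip]

lemma hcExp_eq_of_pair {n : ℕ} (i : Fin n) (u v : (Fin n → Bool) → ℝ)
    (H : ∀ x, u x + u (hcFlip x i) = v x + v (hcFlip x i)) : hcExp n u = hcExp n v := by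
  have h : ∀ u : (Fin n → Bool) → ℝ, ∑ x, u (hcFlip x i) = ∑ x, u x := fun u =>
    Equiv.sum_comp (hcFlip_invol i).toPerm u
  have h2 : ∑ x, (u x + u (hcFlip x i)) = ∑ x, (v x + v (hcFlip x i)) :=
    Finset.sum_congr rfl fun x _ => H x
  rw [Finset.sum_add_distrib, Finset.sum_add_distrib, h, h] at h2
  have : ∑ x, u x = ∑ x, v x := by linarith
  simp only [hcExp, this]

def redV {n : ℕ} (f : (Fin n → Bool) → Bool) (col : (Fin n → Bool) → Fin n → Bool)
    (i : Fin n) (x : Fin n → Bool) : ℝ :=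
  if f x = true ∧ f (hcFlip x i) ≠ f x ∧ col x i = true then (if x i then (-1 : ℝ) else 1) else 0

def blueV {n : ℕ} (f : (Fin n → Bool) → Bool) (col : (Fin n → Bool) → Fin n → Bool)
    (i : Fin n) (x : Fin n → Bool) : ℝ :=
  if f x = false ∧ f (hcFlip x i) ≠ f x ∧ col x i = false then
    (if x i then (1 : ℝ) else -1) else 0

lemma redV_sq {n : ℕ} (f : (Fin n → Bool) → Bool) (col : (Fin n → Bool) → Fin n → Bool)
    (x : Fin n → Bool) : ∑ i, redV f col i x ^ 2 = (sRed f col x : ℝ) := by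
  have h : ∀ i, redV f col i x ^ 2 =
      if f x = true ∧ f (hcFlip x i) ≠ f x ∧ col x i = true then (1 : ℝ) else 0 := by
    intro i; unfold redV; split_ifs <;> norm_num
  simp only [h, sRed]
  by_cases hf : f x = true <;> simp [hf]

lemma blueV_sq {n : ℕ} (f : (Fin n → Bool) → Bool) (col : (Fin n → Bool) → Fin n → Bool)
    (x : Fin n → Bool) : ∑ i, blueV f col i x ^ 2 = (sBlue f col x : ℝ) := by
  have h : ∀ i, blueV f col i x ^ 2 =
      if f x = false ∧ f (hcFlip x i) ≠ f x ∧ col x i = false then (1 : ℝ) else 0 := by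
    intro i; unfold blueV; split_ifs <;> norm_num
  simp only [h, sBlue]
  by_cases hf : f x = true <;> simp [hf]

lemma fcoef_single {n : ℕ} (f : (Fin n → Bool) → Bool) (col : (Fin n → Bool) → Fin n → Bool)
    (hc : colSymm col) (i : Fin n) :
    fcoef n (toReal f) {i} = hcExp n (redV f col i) + hcExp n (blueV f col i) := by
  rw [← hcExp_add', fcoef]
  apply hcExp_eq_of_pair i
  intro x
  have h1 := hc x i
  have h2 : hcFlip (hcFlip x i) i = x := hcFlip_invol i x
  have h3 : hcFlip x i i = !(x i) := by simp [hcFlip]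
  simp only [toReal, chi, redV, blueV, Finset.prod_singleton, h1, h2, h3]
  cases f x <;> cases f (hcFlip x i) <;> cases x i <;> cases col x i <;> simp

lemma talagrandCol_nonneg {n : ℕ} (f : (Fin n → Bool) → Bool)
    (col : (Fin n → Bool) → Fin n → Bool) : 0 ≤ talagrandCol f col :=
  add_nonneg (hcExp_nonneg' fun _ => Real.sqrt_nonneg _)
    (hcExp_nonneg' fun _ => Real.sqrt_nonneg _)

lemma base_level_one {n : ℕ} (f : (Fin n → Bool) → Bool)
    (col : (Fin n → Bool) → Fin n → Bool) (hc : colSymm col) :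
    ∑ i, (fcoef n (toReal f) {i}) ^ 2 ≤ talagrandCol f col := by
  set a : Fin n → ℝ := fun i => fcoef n (toReal f) {i} with ha
  have hT := talagrandCol_nonneg f col
  have h1 : ∑ i, a i ^ 2 ≤ 1 := by
    calc ∑ i, a i ^ 2 = ∑ S ∈ Finset.univ.image (fun i : Fin n => ({i} : Finset (Fin n))),
          fcoef n (toReal f) S ^ 2 := by
          rw [Finset.sum_image]
          intro i _ j _ h
          simpa using h
      _ ≤ ∑ S, fcoef n (toReal f) S ^ 2 :=
          Finset.sum_le_sum_of_subset_of_nonneg (Finset.subset_univ _) fun _ _ _ => sq_nonneg _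
      _ = hcExp n (fun x => toReal f x ^ 2) := parseval' _
      _ ≤ hcExp n (fun _ => 1) := hcExp_mono' fun x => by
          unfold toReal; split_ifs <;> norm_num
      _ = 1 := hcExp_one'
  have key : ∀ u : Fin n → (Fin n → Bool) → ℝ, ∀ s : (Fin n → Bool) → ℕ,
      (∀ x, ∑ i, u i x ^ 2 = (s x : ℝ)) →
      ∑ i, a i * hcExp n (u i) ≤ √(∑ i, a i ^ 2) * hcExp n (fun x => √(s x : ℝ)) := by
    intro u s hs
    simp only [← hcExp_mul']
    rw [← hcExp_sum']
    apply hcExp_mono'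
    intro x
    rw [← hs]
    exact Real.sum_mul_le_sqrt_mul_sqrt _ _ _
  have h2 : ∑ i, a i ^ 2 ≤ √(∑ i, a i ^ 2) * talagrandCol f col := by
    calc ∑ i, a i ^ 2 = ∑ i, a i * hcExp n (redV f col i) + ∑ i, a i * hcExp n (blueV f col i) := by
          rw [← Finset.sum_add_distrib]
          refine Finset.sum_congr rfl fun i _ => ?_
          rw [← mul_add, ← fcoef_single f col hc i, sq]
      _ ≤ _ := by
          rw [talagrandCol, mul_add]
          exact add_le_add (key _ _ (redV_sq f col)) (key _ _ (blueV_sq f col))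
  have h3 : √(∑ i, a i ^ 2) ≤ 1 := Real.sqrt_le_one.mpr h1
  calc _ ≤ _ := h2
    _ ≤ 1 * talagrandCol f col := by gcongr
    _ = _ := one_mul _

def sRedJ {n : ℕ} (J : Finset (Fin n)) (f : (Fin n → Bool) → Bool)
    (col : (Fin n → Bool) → Fin n → Bool) (x : Fin n → Bool) : ℕ :=
  if f x then
    (Finset.univ.filter fun i => (f (hcFlip x i) ≠ f x ∧ col x i = true) ∧ i ∈ J).card
  else 0

def sBlueJ {n : ℕ} (J : Finset (Fin n)) (f : (Fin n → Bool) → Bool)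
    (col : (Fin n → Bool) → Fin n → Bool) (x : Fin n → Bool) : ℕ :=
  if f x then 0
  else (Finset.univ.filter fun i => (f (hcFlip x i) ≠ f x ∧ col x i = false) ∧ i ∈ J).card

lemma comb_flip_mem {n : ℕ} {J : Finset (Fin n)} (x y : Fin n → Bool) {i : Fin n} (hi : i ∈ J) :
    comb J x (hcFlip y i) = hcFlip (comb J x y) i := by
  ext k
  by_cases hk : k = i
  · subst hk; simp [comb, hcFlip, hi]
  · simp [comb, hcFlip, hk]

lemma comb_flip_not_mem {n : ℕ} {J : Finset (Fin n)} (x y : Fin n → Bool) {i : Fin n}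
    (hi : i ∉ J) : comb J x (hcFlip y i) = comb J x y := by
  ext k
  by_cases hk : k = i
  · subst hk; simp [comb, hi]
  · simp [comb, hcFlip, hk]

lemma sens_comb {n : ℕ} (J : Finset (Fin n)) (f : (Fin n → Bool) → Bool)
    (x y : Fin n → Bool) (i : Fin n) :
    f (comb J x (hcFlip y i)) ≠ f (comb J x y) ↔
      f (hcFlip (comb J x y) i) ≠ f (comb J x y) ∧ i ∈ J := by
  by_cases hi : i ∈ J
  · simp [comb_flip_mem x y hi, hi]
  · simp [comb_flip_not_mem x y hi, hi]

/-- Boundary restricted to directions in `J`. -/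
def talJ {n : ℕ} (J : Finset (Fin n)) (f : (Fin n → Bool) → Bool)
    (col : (Fin n → Bool) → Fin n → Bool) : ℝ :=
  hcExp n (fun x => Real.sqrt (sRedJ J f col x)) + hcExp n (fun x => Real.sqrt (sBlueJ J f col x))

/-- Fix the coordinates outside `J` according to `x`. -/
def restrF {n : ℕ} {α : Type} (J : Finset (Fin n)) (f : (Fin n → Bool) → α)
    (x : Fin n → Bool) : (Fin n → Bool) → α := fun y => f (comb J x y)

lemma sRed_restr {n : ℕ} (J : Finset (Fin n)) (f : (Fin n → Bool) → Bool)
    (col : (Fin n → Bool) → Fin n → Bool) (x y : Fin n → Bool) :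
    sRed (restrF J f x) (restrF J col x) y = sRedJ J f col (comb J x y) := by
  simp only [sRed, sRedJ, restrF]
  simp only [sens_comb, and_right_comm]

lemma sBlue_restr {n : ℕ} (J : Finset (Fin n)) (f : (Fin n → Bool) → Bool)
    (col : (Fin n → Bool) → Fin n → Bool) (x y : Fin n → Bool) :
    sBlue (restrF J f x) (restrF J col x) y = sBlueJ J f col (comb J x y) := by
  simp only [sBlue, sBlueJ, restrF]
  simp only [sens_comb, and_right_comm]

lemma exp_tal_restr {n : ℕ} (J : Finset (Fin n)) (f : (Fin n → Bool) → Bool)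
    (col : (Fin n → Bool) → Fin n → Bool) :
    hcExp n (fun x => talagrandCol (restrF J f x) (restrF J col x)) = talJ J f col := by
  simp only [talagrandCol, sRed_restr, sBlue_restr]
  rw [hcExp_add', hcExp_comb J (fun w => √(sRedJ J f col w : ℝ)),
    hcExp_comb J (fun w => √(sBlueJ J f col w : ℝ)), talJ]

lemma colSymm_restr {n : ℕ} (J : Finset (Fin n))
    (col : (Fin n → Bool) → Fin n → Bool) (hc : colSymm col) (x : Fin n → Bool) :
    colSymm (restrF J col x) := by
  intro y i
  simp only [restrF]
  by_cases hi : i ∈ J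
  · rw [comb_flip_mem x y hi, hc]
  · rw [comb_flip_not_mem x y hi]

lemma fcoef_restr {n : ℕ} (J : Finset (Fin n)) (f : (Fin n → Bool) → Bool) (i : Fin n)
    (S : Finset (Fin n)) (hS : S ∩ J = {i}) :
    fcoef n (fun x => fcoef n (toReal (restrF J f x)) {i}) (S.erase i) = fcoef n (toReal f) S := by
  have hi : i ∈ S ∩ J := by rw [hS]; simp
  rw [Finset.mem_inter] at hi
  simp only [fcoef]
  rw [← hcExp_comb J (fun w => toReal f w * chi S w)]
  congr 1
  ext x
  rw [mul_comm, ← hcExp_mul']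
  congr 1
  ext y
  have h : chi S (comb J x y) = chi {i} y * chi (S.erase i) x := by
    simp only [chi, Finset.prod_singleton]
    rw [← Finset.mul_prod_erase S _ hi.1]
    congr 1
    · simp [comb, hi.2]
    · refine Finset.prod_congr rfl fun k hk => ?_
      have : k ∉ J := by
        intro hkJ
        have : k ∈ S ∩ J := Finset.mem_inter.mpr ⟨Finset.mem_of_mem_erase hk, hkJ⟩
        rw [hS, Finset.mem_singleton] at this
        exact (Finset.ne_of_mem_erase hk) this
      simp [comb, this]
  have h' : toReal (restrF J f x) y = toReal f (comb J x y) := rfl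
  rw [h, h']
  ring

lemma part_bound {n : ℕ} (J : Finset (Fin n)) (f : (Fin n → Bool) → Bool)
    (col : (Fin n → Bool) → Fin n → Bool) (hc : colSymm col) :
    ∑ i, ∑ S with S ∩ J = {i}, fcoef n (toReal f) S ^ 2 ≤ talJ J f col := by
  calc ∑ i, ∑ S with S ∩ J = {i}, fcoef n (toReal f) S ^ 2
      ≤ ∑ i, hcExp n (fun x => fcoef n (toReal (restrF J f x)) {i} ^ 2) := by
        refine Finset.sum_le_sum fun i _ => ?_
        rw [← parseval' (fun x => fcoef n (toReal (restrF J f x)) {i})]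
        calc _ = ∑ S with S ∩ J = {i},
              fcoef n (fun x => fcoef n (toReal (restrF J f x)) {i}) (S.erase i) ^ 2 := by
              refine Finset.sum_congr rfl fun S hS => ?_
              rw [fcoef_restr J f i S (Finset.mem_filter.mp hS).2]
          _ = ∑ T ∈ (Finset.univ.filter (fun S : Finset (Fin n) => S ∩ J = {i})).image
                (fun S => S.erase i),
              fcoef n (fun x => fcoef n (toReal (restrF J f x)) {i}) T ^ 2 := by
              rw [Finset.sum_image]
              intro S hS T hT h
              have hmem : ∀ S : Finset (Fin n), S ∩ J = {i} → i ∈ S := by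
                intro S hS
                have : i ∈ S ∩ J := by rw [hS]; simp
                exact (Finset.mem_inter.mp this).1
              have h1 := hmem S (by simpa using hS)
              have h2 := hmem T (by simpa using hT)
              rw [← Finset.insert_erase h1, ← Finset.insert_erase h2]
              simp only at h
              rw [h]
          _ ≤ _ := Finset.sum_le_sum_of_subset_of_nonneg (Finset.subset_univ _)
              fun _ _ _ => sq_nonneg _
    _ = hcExp n (fun x => ∑ i, fcoef n (toReal (restrF J f x)) {i} ^ 2) := by
        rw [hcExp_sum']
    _ ≤ hcExp n (fun x => talagrandCol (restrF J f x) (restrF J col x)) :=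
        hcExp_mono' fun x => base_level_one _ _ (colSymm_restr J col hc x)
    _ = _ := exp_tal_restr J f col

lemma sqrt_sum_parts {n m : ℕ} (g : Fin n → Fin m) (A : Finset (Fin n)) :
    ∑ j, √((A.filter (fun i => g i = j)).card : ℝ) ≤ √(m : ℝ) * √(A.card : ℝ) := by
  have h := Real.sum_mul_le_sqrt_mul_sqrt Finset.univ (fun _ : Fin m => (1 : ℝ))
    (fun j => √((A.filter (fun i => g i = j)).card : ℝ))
  have h2 : ∑ j, ((A.filter (fun i => g i = j)).card : ℝ) = A.card := by
    rw [Finset.card_eq_sum_card_fiberwise (f := g) (t := Finset.univ) (by simp)]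
    push_cast; rfl
  simpa [h2] using h

lemma tal_parts {n m : ℕ} (g : Fin n → Fin m) (f : (Fin n → Bool) → Bool)
    (col : (Fin n → Bool) → Fin n → Bool) :
    ∑ j, talJ (Finset.univ.filter (fun i => g i = j)) f col ≤ √(m : ℝ) * talagrandCol f col := by
  simp only [talJ, talagrandCol]
  rw [Finset.sum_add_distrib, ← hcExp_sum', ← hcExp_sum', mul_add, ← hcExp_mul', ← hcExp_mul']
  refine add_le_add (hcExp_mono' fun x => ?_) (hcExp_mono' fun x => ?_)
  · by_cases hf : f x = true
    · have := sqrt_sum_parts g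
        (Finset.univ.filter fun i => f (hcFlip x i) ≠ f x ∧ col x i = true)
      simpa [sRedJ, sRed, hf, Finset.filter_filter] using this
    · simp [sRedJ, sRed, hf]
  · by_cases hf : f x = true
    · simp [sBlueJ, sBlue, hf]
    · have := sqrt_sum_parts g
        (Finset.univ.filter fun i => f (hcFlip x i) ≠ f x ∧ col x i = false)
      simpa [sBlueJ, sBlue, hf, Finset.filter_filter] using this

lemma count_parts {n m : ℕ} (g : Fin n → Fin m) (S : Finset (Fin n)) :
    ∑ i ∈ S, (1 - ∑ k ∈ S.erase i, if g k = g i then (1 : ℝ) else 0) ≤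
      ∑ j, ∑ i, if S ∩ (Finset.univ.filter (fun i => g i = j)) = {i} then (1 : ℝ) else 0 := by
  rw [Finset.sum_comm]
  calc _ ≤ ∑ i ∈ S, ∑ j, (if S ∩ (Finset.univ.filter (fun i => g i = j)) = {i}
          then (1 : ℝ) else 0) := by
        refine Finset.sum_le_sum fun i hi => ?_
        by_cases h : ∃ k ∈ S.erase i, g k = g i
        · obtain ⟨k, hk, hki⟩ := h
          have h1 : (1 : ℝ) ≤ ∑ k ∈ S.erase i, if g k = g i then (1 : ℝ) else 0 := by
            have := Finset.single_le_sum (f := fun k => if g k = g i then (1 : ℝ) else 0)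
              (fun k _ => by positivity) hk
            simpa [hki] using this
          have h2 : (0 : ℝ) ≤ ∑ j, (if S ∩ (Finset.univ.filter (fun i => g i = j)) = {i}
            then (1 : ℝ) else 0) := Finset.sum_nonneg fun _ _ => by positivity
          linarith
        · push Not at h
          have h0 : (∑ k ∈ S.erase i, if g k = g i then (1 : ℝ) else 0) = 0 :=
            Finset.sum_eq_zero fun k hk => by simp [h k hk]
          have h3 : S ∩ (Finset.univ.filter (fun k => g k = g i)) = {i} := by
            ext k
            simp only [Finset.mem_inter, Finset.mem_filter, Finset.mem_univ, true_and,
              Finset.mem_singleton]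
            constructor
            · rintro ⟨hkS, hk⟩
              by_contra hne
              exact h k (Finset.mem_erase.mpr ⟨hne, hkS⟩) hk
            · rintro rfl
              exact ⟨hi, rfl⟩
          have := Finset.single_le_sum (f := fun j =>
            (if S ∩ (Finset.univ.filter (fun i => g i = j)) = {i} then (1 : ℝ) else 0))
              (fun k _ => by positivity) (Finset.mem_univ (g i))
          simp only [h3, if_true] at this
          rw [h0]; linarith
    _ ≤ _ := Finset.sum_le_sum_of_subset_of_nonneg (Finset.subset_univ _)
          fun _ _ _ => Finset.sum_nonneg fun _ _ => by positivity

lemma coll_count {n m : ℕ} (i k : Fin n) (h : k ≠ i) :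
    (m : ℝ) * ∑ g : Fin n → Fin m, (if g k = g i then (1 : ℝ) else 0) = (m : ℝ) ^ n := by
  have hinv : Function.Involutive
      (fun p : (Fin n → Fin m) × Fin m => (Function.update p.1 k p.2, p.1 k)) := by
    rintro ⟨x, y⟩
    simp
  have h1 := Equiv.sum_comp hinv.toPerm (fun p => if p.1 k = p.1 i then (1 : ℝ) else 0)
  simp only [Function.Involutive.coe_toPerm] at h1
  rw [Fintype.sum_prod_type, Fintype.sum_prod_type] at h1
  simp [Function.update_of_ne h.symm] at h1
  rw [Finset.mul_sum]
  simp only [mul_ite, mul_one, mul_zero]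
  rw [h1]
  refine Finset.sum_congr rfl fun x _ => ?_
  split_ifs <;> simp

lemma g_bound {n m : ℕ} (g : Fin n → Fin m) (f : (Fin n → Bool) → Bool)
    (col : (Fin n → Bool) → Fin n → Bool) (hc : colSymm col) (C : Finset (Finset (Fin n))) :
    ∑ S ∈ C, fcoef n (toReal f) S ^ 2 *
      ∑ i ∈ S, (1 - ∑ k ∈ S.erase i, if g k = g i then (1 : ℝ) else 0) ≤
      √(m : ℝ) * talagrandCol f col := by
  refine le_trans ?_ (tal_parts g f col)
  refine le_trans ?_ (Finset.sum_le_sum fun j _ => part_bound _ f col hc)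
  calc _ ≤ ∑ S ∈ C, fcoef n (toReal f) S ^ 2 *
        ∑ j, ∑ i, (if S ∩ (Finset.univ.filter (fun i => g i = j)) = {i} then (1 : ℝ) else 0) :=
        Finset.sum_le_sum fun S _ => mul_le_mul_of_nonneg_left (count_parts g S) (sq_nonneg _)
    _ ≤ ∑ S, fcoef n (toReal f) S ^ 2 *
        ∑ j, ∑ i, (if S ∩ (Finset.univ.filter (fun i => g i = j)) = {i} then (1 : ℝ) else 0) :=
        Finset.sum_le_sum_of_subset_of_nonneg (Finset.subset_univ _) fun _ _ _ =>
          mul_nonneg (sq_nonneg _) (Finset.sum_nonneg fun _ _ => Finset.sum_nonneg fun _ _ => by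
            positivity)
    _ = _ := by
        simp only [Finset.mul_sum, Finset.sum_filter]
        rw [Finset.sum_comm]
        refine Finset.sum_congr rfl fun j _ => ?_
        rw [Finset.sum_comm]
        simp

lemma wApprox_bound {n d : ℕ} (hd : 1 ≤ d) (f : (Fin n → Bool) → Bool)
    (col : (Fin n → Bool) → Fin n → Bool) (hc : colSymm col) :
    √(d : ℝ) * wApprox n (toReal f) d ≤ 4 * talagrandCol f col := by
  set m := 4 * d with hm
  have hmpos : (0 : ℝ) < m := by rw [hm]; positivity
  set C := Finset.univ.filter (fun S : Finset (Fin n) => d ≤ S.card ∧ S.card < 2 * d) with hC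
  have h1 := Finset.sum_le_sum (s := (Finset.univ : Finset (Fin n → Fin m)))
    fun g _ => g_bound g f col hc C
  rw [Finset.sum_comm] at h1
  have hcnt : ∀ S : Finset (Fin n), ∑ g : Fin n → Fin m,
      ∑ i ∈ S, (1 - ∑ k ∈ S.erase i, if g k = g i then (1 : ℝ) else 0)
      = (m : ℝ) ^ n * (S.card * (1 - (S.card - 1) / m)) := by
    intro S
    rw [Finset.sum_comm]
    have : ∀ i ∈ S, ∑ g : Fin n → Fin m, (1 - ∑ k ∈ S.erase i, if g k = g i then (1 : ℝ) else 0)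
        = (m : ℝ) ^ n * (1 - (S.card - 1) / m) := by
      intro i hi
      rw [Finset.sum_sub_distrib, Finset.sum_comm]
      have h2 : ∀ k ∈ S.erase i, ∑ g : Fin n → Fin m, (if g k = g i then (1 : ℝ) else 0)
          = (m : ℝ) ^ n / m := by
        intro k hk
        rw [← coll_count i k (Finset.ne_of_mem_erase hk)]
        field_simp
      rw [Finset.sum_congr rfl h2]
      have hpos : 1 ≤ S.card := Finset.card_pos.mpr ⟨i, hi⟩
      simp [Finset.card_erase_of_mem hi, Nat.cast_sub hpos]
      ring
    rw [Finset.sum_congr rfl this]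
    simp
    ring
  simp only [← Finset.mul_sum, hcnt] at h1
  simp only [Finset.sum_const, Finset.card_univ, Fintype.card_fun, Fintype.card_fin,
    nsmul_eq_mul] at h1
  push_cast at h1
  have h3 : (m : ℝ) ^ n * ((d / 2 : ℝ) * wApprox n (toReal f) d) ≤
      (m : ℝ) ^ n * (√(m : ℝ) * talagrandCol f col) := by
    refine le_trans ?_ (h1.trans_eq (by ring))
    rw [wApprox, Finset.mul_sum, Finset.mul_sum]
    refine Finset.sum_le_sum fun S hS => ?_
    obtain ⟨ha, hb⟩ := (Finset.mem_filter.mp hS).2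
    have ha' : (d : ℝ) ≤ S.card := by exact_mod_cast ha
    have hb' : (S.card : ℝ) + 1 ≤ 2 * d := by exact_mod_cast hb
    have hm' : (m : ℝ) = 4 * d := by rw [hm]; push_cast; ring
    have h4 : (1 / 2 : ℝ) ≤ 1 - (S.card - 1) / m := by
      rw [le_sub_comm, div_le_iff₀ hmpos, hm']
      linarith
    have h5 : (d / 2 : ℝ) ≤ S.card * (1 - (S.card - 1) / m) := by
      calc (d / 2 : ℝ) = d * (1 / 2) := by ring
        _ ≤ _ := by gcongr
    calc _ = (fcoef n (toReal f) S ^ 2 * (m : ℝ) ^ n) * (d / 2 : ℝ) := by ring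
      _ ≤ (fcoef n (toReal f) S ^ 2 * (m : ℝ) ^ n) * (S.card * (1 - (S.card - 1) / m)) := by
          gcongr
      _ = _ := by ring
  have h4 := le_of_mul_le_mul_left h3 (by positivity)
  have h5 : √(m : ℝ) = 2 * √(d : ℝ) := by
    rw [hm]; push_cast
    rw [Real.sqrt_mul (by norm_num), show (4 : ℝ) = 2 ^ 2 by norm_num,
      Real.sqrt_sq (by norm_num)]
  rw [h5] at h4
  have hdp : (0 : ℝ) < √(d : ℝ) := Real.sqrt_pos.mpr (by exact_mod_cast hd)
  have h6 : (d : ℝ) = √(d : ℝ) * √(d : ℝ) := (Real.mul_self_sqrt (by positivity)).symm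
  refine le_of_mul_le_mul_left ?_ hdp
  calc √(d : ℝ) * (√(d : ℝ) * wApprox n (toReal f) d)
      = 2 * ((d / 2 : ℝ) * wApprox n (toReal f) d) := by
        rw [← mul_assoc, ← h6]; ring
    _ ≤ 2 * (2 * √(d : ℝ) * talagrandCol f col) := by gcongr
    _ = _ := by ring

lemma wGe_split {n d : ℕ} (g : (Fin n → Bool) → ℝ) :
    wGe n g d = wApprox n g d + wGe n g (2 * d) := by
  unfold wGe wApprox
  rw [← Finset.sum_filter_add_sum_filter_not _ (fun S : Finset (Fin n) => S.card < 2 * d),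
    Finset.filter_filter, Finset.filter_filter]
  congr 2
  ext S
  simp only [Finset.mem_filter, Finset.mem_univ, true_and]
  omega

lemma wGe_bound {n : ℕ} (f : (Fin n → Bool) → Bool)
    (col : (Fin n → Bool) → Fin n → Bool) (hc : colSymm col) (t : ℕ) :
    ∀ d : ℕ, 1 ≤ d → n + 1 ≤ d + t → √(d : ℝ) * wGe n (toReal f) d ≤ 16 * talagrandCol f col := by
  have hT := talagrandCol_nonneg f col
  induction t with
  | zero =>
    intro d hd hn
    have : wGe n (toReal f) d = 0 := by
      unfold wGe
      rw [Finset.filter_false_of_mem, Finset.sum_empty]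
      intro S _
      have := Finset.card_le_univ S
      simp at this
      omega
    rw [this]; linarith
  | succ t ih =>
    intro d hd hn
    have h1 := ih (2 * d) (by omega) (by omega)
    have h2 := wApprox_bound hd f col hc
    rw [wGe_split, mul_add]
    push_cast at h1
    rw [Real.sqrt_mul (by norm_num)] at h1
    have h3 : (4 / 3 : ℝ) ≤ √2 := Real.le_sqrt_of_sq_le (by norm_num)
    have h4 : 0 ≤ √(d : ℝ) * wGe n (toReal f) (2 * d) :=
      mul_nonneg (Real.sqrt_nonneg _) (Finset.sum_nonneg fun _ _ => sq_nonneg _)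
    have h5 : (4 / 3 : ℝ) * (√(d : ℝ) * wGe n (toReal f) (2 * d)) ≤ 16 * talagrandCol f col := by
      refine le_trans (mul_le_mul_of_nonneg_right h3 h4) ?_
      rw [← mul_assoc]; exact h1
    linarith

theorem robust_talagrand_level_ge_d :
    ∃ c : ℝ, 0 < c ∧ ∀ (n : ℕ) (d : ℕ), 1 ≤ d →
      ∀ (f : (Fin n → Bool) → Bool) (col : (Fin n → Bool) → Fin n → Bool),
        colSymm col →
        talagrandCol f col ≥ c * Real.sqrt d * wGe n (toReal f) d := by
  refine ⟨1 / 16, by norm_num, fun n d hd f col hc => ?_⟩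
  have := wGe_bound f col hc (n + 1) d hd (by omega)
  rw [ge_iff_le, mul_assoc]
  linarith

end
end

section
/- Let f : {0,1}^n → ℝ, let p ≥ 1, let ρ_1, …, ρ_n ∈ [0,1], and let S = T_{ρ_1} ⊗ ⋯ ⊗ T_{ρ_n} be the corresponding product noise operator. Then E_x[‖∇(Sf)(x)‖_p] ≤ E_x[‖∇f(x)‖_p]. -/
open Finset

noncomputable section

/-- The product noise operator `T_{ρ₁} ⊗ ⋯ ⊗ T_{ρₙ}`: independently for each `i`,
`y i = x i` with probability `ρ i` and `y i` is uniform otherwise, so `y i = x i`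
with total probability `(1 + ρ i)/2`. -/
def prodNoiseOp {n : ℕ} (ρ : Fin n → ℝ) (g : (Fin n → Bool) → ℝ)
    (x : Fin n → Bool) : ℝ :=
  ∑ y : Fin n → Bool,
    (∏ i, if y i = x i then (1 + ρ i) / 2 else (1 - ρ i) / 2) * g y

def hcXor {n : ℕ} (z x : Fin n → Bool) : Fin n → Bool := fun i => xor (z i) (x i)

lemma hcXor_invol {n : ℕ} (z x : Fin n → Bool) : hcXor (hcXor z x) x = z := by
  funext i; simp [hcXor]

lemma hcXor_invol2 {n : ℕ} (z x : Fin n → Bool) : hcXor z (hcXor z x) = x := by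
  funext i; simp [hcXor]

def hcW {n : ℕ} (ρ : Fin n → ℝ) (z : Fin n → Bool) : ℝ :=
  ∏ i, if z i = false then (1 + ρ i) / 2 else (1 - ρ i) / 2

lemma hcW_nonneg {n : ℕ} (ρ : Fin n → ℝ) (hρ : ∀ i, 0 ≤ ρ i ∧ ρ i ≤ 1) (z : Fin n → Bool) :
    0 ≤ hcW ρ z := by
  apply Finset.prod_nonneg
  intro i _
  have := hρ i
  split_ifs <;> linarith

lemma hcW_sum {n : ℕ} (ρ : Fin n → ℝ) : ∑ z, hcW ρ z = 1 := by
  unfold hcW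
  have h := Finset.prod_univ_sum (fun _ : Fin n => (Finset.univ : Finset Bool))
    (fun i b => if b = false then (1 + ρ i) / 2 else (1 - ρ i) / 2)
  rw [Fintype.piFinset_univ] at h
  rw [← h]
  apply Finset.prod_eq_one
  intro i _
  simp
  ring

lemma prodNoise_eq {n : ℕ} (ρ : Fin n → ℝ) (g : (Fin n → Bool) → ℝ) (x : Fin n → Bool) :
    prodNoiseOp ρ g x = ∑ z, hcW ρ z * g (hcXor z x) := by
  unfold prodNoiseOp
  refine Finset.sum_bij' (fun y _ => hcXor y x) (fun z _ => hcXor z x) (by simp) (by simp)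
    (fun y _ => hcXor_invol y x) (fun y _ => hcXor_invol y x) ?_
  intro y _
  rw [hcXor_invol]
  congr 1
  unfold hcW
  apply Finset.prod_congr rfl
  intro i _
  simp [hcXor]

lemma hcXor_update {n : ℕ} (z x : Fin n → Bool) (i : Fin n) (b : Bool) :
    hcXor z (Function.update x i b) = Function.update (hcXor z x) i (xor (z i) b) := by
  funext j
  by_cases h : j = i
  · subst h; simp [hcXor]
  · simp [hcXor, h]

lemma abs_derivOn_xor {n : ℕ} (g : (Fin n → Bool) → ℝ) (z x : Fin n → Bool) (i : Fin n) :
    |derivOn (fun y => g (hcXor z y)) i x| = |derivOn g i (hcXor z x)| := by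
  unfold derivOn
  simp only [hcXor_update]
  cases z i
  · simp
  · simp [abs_sub_comm]

lemma gradNormP_eq {n : ℕ} (p : ℝ) (hp : 1 ≤ p) (g : (Fin n → Bool) → ℝ) (x : Fin n → Bool) :
    gradNormP p g x = ‖WithLp.toLp (ENNReal.ofReal p) (fun i => derivOn g i x)‖ := by
  have h : (ENNReal.ofReal p).toReal = p := ENNReal.toReal_ofReal (by linarith)
  rw [PiLp.norm_eq_sum (by rw [h]; linarith)]
  simp [gradNormP, h]

lemma gradNormP_noise {n : ℕ} (f : (Fin n → Bool) → ℝ)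
    (p : ℝ) (hp : 1 ≤ p) (ρ : Fin n → ℝ) (hρ : ∀ i, 0 ≤ ρ i ∧ ρ i ≤ 1) (x : Fin n → Bool) :
    gradNormP p (prodNoiseOp ρ f) x ≤ ∑ z, hcW ρ z * gradNormP p f (hcXor z x) := by
  haveI : Fact (1 ≤ ENNReal.ofReal p) := ⟨by simpa using hp⟩
  have h1 : ∀ z, gradNormP p f (hcXor z x) = gradNormP p (fun y => f (hcXor z y)) x := by
    intro z
    simp only [gradNormP, abs_derivOn_xor]
  simp only [h1, gradNormP_eq p hp]
  have h2 : WithLp.toLp (ENNReal.ofReal p) (fun i => derivOn (prodNoiseOp ρ f) i x)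
      = ∑ z, hcW ρ z •
        WithLp.toLp (ENNReal.ofReal p) (fun i => derivOn (fun y => f (hcXor z y)) i x) := by
    ext i
    simp [derivOn, prodNoise_eq, mul_sub, Finset.sum_sub_distrib]
  rw [h2]
  refine (norm_sum_le _ _).trans (le_of_eq ?_)
  apply Finset.sum_congr rfl
  intro z _
  rw [norm_smul, Real.norm_of_nonneg (hcW_nonneg ρ hρ z)]

theorem noise_decreases_talagrand_boundary (n : ℕ) (f : (Fin n → Bool) → ℝ)
    (p : ℝ) (hp : 1 ≤ p) (ρ : Fin n → ℝ) (hρ : ∀ i, 0 ≤ ρ i ∧ ρ i ≤ 1) :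
    hcExp n (fun x => gradNormP p (prodNoiseOp ρ f) x) ≤
      hcExp n (fun x => gradNormP p f x) := by
  unfold hcExp
  apply div_le_div_of_nonneg_right _ (by positivity)
  refine (Finset.sum_le_sum fun x _ => gradNormP_noise f p hp ρ hρ x).trans (le_of_eq ?_)
  rw [Finset.sum_comm]
  have h : ∀ z : Fin n → Bool, ∑ x, hcW ρ z * gradNormP p f (hcXor z x)
      = hcW ρ z * ∑ x, gradNormP p f x := by
    intro z
    rw [← Finset.mul_sum]
    congr 1
    exact Finset.sum_bij' (fun y _ => hcXor z y) (fun y _ => hcXor z y) (by simp) (by simp)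
      (fun y _ => hcXor_invol2 z y) (fun y _ => hcXor_invol2 z y) (fun _ _ => rfl)
  simp only [h]
  rw [← Finset.sum_mul, hcW_sum, one_mul]

end
end
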